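/- Let d ≥ 2, α > −1 with p₀ := d/(1+α) > 1, and Δ > 1. Define v(x) = (log|x|)^Δ for x ∈ ℝ^d with |x| > e. Then there exist constants 0 < c₁ ≤ c₂ < ∞ (depending only on d, α, Δ) such that for all p ∈ (p₀, ∞): c₁ · p^{Δ−1}/(p(1+α) − d)^{(Δ−1) + 1/p} ≤ ( ∫_{|x|>e} ( |grad v(x)| · |x|^{−α} )^p dx )^{1/p} ≤ c₂ · p^{Δ−1}/(p(1+α) − d)^{(Δ−1) + 1/p}. -/

import Mathlib

open MeasureTheory Set ENNReal

/-!
In polar coordinates the `p`-th power of the weighted norm is `Δ ^ p` times the surface mass of the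
unit sphere times `∫_R^∞ (log r) ^ q * r ^ (-s - 1) dr`, where `q = (Δ - 1) p` and
`s = p (1 + α) - d`. Restricting to `log r > log R + p / s` bounds this integral from below. From
above, half of the decay absorbs the logarithm: `(log r) ^ q ≤ (2 q / s) ^ q * r ^ (s / 2)`. The
`p`-th roots of both bounds are `(p / s) ^ (Δ - 1) * s ^ (-1 / p)` up to factors that stay between
positive constants, because `s / p ≤ 1 + α` and `1 / p ≤ (1 + α) / d`.
-/

section RealPowers

variable {w y m : ℝ}

lemma min_one_rpow_le_rpow (hw : 0 < w) (hy : 0 ≤ y) (hym : y ≤ m) : min 1 (w ^ m) ≤ w ^ y := by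
  rcases le_total 1 w with h | h
  · exact min_le_of_left_le (Real.one_le_rpow h hy)
  · exact min_le_of_right_le (Real.rpow_le_rpow_of_exponent_ge hw h hym)

lemma rpow_le_max_one_rpow (hw : 0 ≤ w) (hy : 0 ≤ y) (hym : y ≤ m) : w ^ y ≤ max 1 (w ^ m) := by
  rcases le_total 1 w with h | h
  · exact le_max_of_le_right (Real.rpow_le_rpow_of_exponent_le h hym)
  · exact le_max_of_le_left (Real.rpow_le_one hw h hy)

lemma log_rpow_le_mul_rpow {r q δ : ℝ} (hr : 1 ≤ r) (hq : 0 ≤ q) (hδ : 0 < δ) :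
    Real.log r ^ q ≤ (q / δ) ^ q * r ^ δ := by
  have hr0 : 0 ≤ r := by linarith
  rcases hq.eq_or_lt with rfl | hq
  · simpa using Real.one_le_rpow hr hδ.le
  calc Real.log r ^ q ≤ (r ^ (δ / q) / (δ / q)) ^ q :=
        Real.rpow_le_rpow (Real.log_nonneg hr) (Real.log_le_rpow_div hr0 (by positivity)) hq.le
    _ = (q / δ * r ^ (δ / q)) ^ q := by
        rw [div_eq_mul_inv, inv_div, mul_comm (r ^ _)]
    _ = (q / δ) ^ q * r ^ δ := by
        rw [Real.mul_rpow (by positivity) (by positivity), ← Real.rpow_mul hr0,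
          div_mul_cancel₀ δ hq.ne']

end RealPowers

lemma setLIntegral_Ioi_rpow {R s : ℝ} (hR : 0 < R) (hs : 0 < s) :
    ∫⁻ r in Ioi R, ENNReal.ofReal (r ^ (-s - 1)) = ENNReal.ofReal (R ^ (-s) / s) := by
  have hexp : -s - 1 < -1 := by linarith
  rw [← ofReal_integral_eq_lintegral_ofReal (integrableOn_Ioi_rpow_of_lt hexp hR),
    integral_Ioi_rpow_of_lt hexp hR, sub_add_cancel, neg_div_neg_eq]
  exact (ae_restrict_mem measurableSet_Ioi).mono
    fun r hr ↦ Real.rpow_nonneg (hR.trans (mem_Ioi.1 hr)).le _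

/-- The `q`-th logarithmic moment `∫_R^∞ (log r) ^ q * r ^ (-s - 1) dr`, with values in `[0, ∞]`;
it is the radial part of the weighted norm of the gradient. -/
noncomputable def logMoment (R q s : ℝ) : ℝ≥0∞ :=
  ∫⁻ r in Ioi R, ENNReal.ofReal (Real.log r ^ q * r ^ (-s - 1))

section LogMoment

variable {R q s : ℝ}

lemma ofReal_le_logMoment {T : ℝ} (hR : 1 ≤ R) (hq : 0 ≤ q) (hs : 0 < s) (hT : 0 ≤ T) :
    ENNReal.ofReal (T ^ q * ((R * Real.exp T) ^ (-s) / s)) ≤ logMoment R q s := by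
  have hRT : 0 < R * Real.exp T := by positivity
  have hR_le : R ≤ R * Real.exp T := le_mul_of_one_le_right (by linarith) (Real.one_le_exp hT)
  have hT_le_log {r : ℝ} (hr : r ∈ Ioi (R * Real.exp T)) : T ≤ Real.log r :=
    (Real.le_log_iff_exp_le (hRT.trans hr)).2
      ((le_mul_of_one_le_left (Real.exp_pos T).le hR).trans hr.out.le)
  calc ENNReal.ofReal (T ^ q * ((R * Real.exp T) ^ (-s) / s))
      = ∫⁻ r in Ioi (R * Real.exp T), ENNReal.ofReal (T ^ q * r ^ (-s - 1)) := by
        simp_rw [ENNReal.ofReal_mul (Real.rpow_nonneg hT q)]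
        rw [lintegral_const_mul' _ _ ofReal_ne_top, setLIntegral_Ioi_rpow hRT hs]
    _ ≤ ∫⁻ r in Ioi (R * Real.exp T), ENNReal.ofReal (Real.log r ^ q * r ^ (-s - 1)) := by
        refine setLIntegral_mono' measurableSet_Ioi fun r hr ↦ ENNReal.ofReal_le_ofReal ?_
        have hr0 : 0 ≤ r := (hRT.trans hr).le
        gcongr
        exact hT_le_log hr
    _ ≤ logMoment R q s := lintegral_mono_set (Ioi_subset_Ioi hR_le)

lemma logMoment_le_ofReal (hR : 1 ≤ R) (hq : 0 ≤ q) (hs : 0 < s) :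
    logMoment R q s ≤ ENNReal.ofReal ((2 * q / s) ^ q * (2 / s)) := by
  have hR0 : 0 < R := by linarith
  calc logMoment R q s
      ≤ ∫⁻ r in Ioi R, ENNReal.ofReal ((2 * q / s) ^ q * r ^ (-(s / 2) - 1)) := by
        refine setLIntegral_mono' measurableSet_Ioi fun r hr ↦ ENNReal.ofReal_le_ofReal ?_
        have hr0 : 0 < r := hR0.trans hr
        calc Real.log r ^ q * r ^ (-s - 1)
            ≤ (q / (s / 2)) ^ q * r ^ (s / 2) * r ^ (-s - 1) := by
              gcongr
              exact log_rpow_le_mul_rpow (hR.trans hr.out.le) hq (by positivity)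
          _ = (2 * q / s) ^ q * r ^ (-(s / 2) - 1) := by
              rw [mul_assoc, ← Real.rpow_add hr0]
              ring_nf
    _ = ENNReal.ofReal ((2 * q / s) ^ q * (R ^ (-(s / 2)) / (s / 2))) := by
        have hconst : 0 ≤ (2 * q / s) ^ q := by positivity
        simp_rw [ENNReal.ofReal_mul hconst]
        rw [lintegral_const_mul' _ _ ofReal_ne_top, setLIntegral_Ioi_rpow hR0 (by positivity)]
    _ ≤ ENNReal.ofReal ((2 * q / s) ^ q * (2 / s)) := by
        refine ENNReal.ofReal_le_ofReal ?_
        rw [← one_div_div s 2]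
        gcongr
        exact Real.rpow_le_one_of_one_le_of_nonpos hR (by linarith)

variable {β p : ℝ}

lemma ofReal_le_logMoment_rpow_one_div (hR : 1 ≤ R) (hβ : 0 ≤ β) (hp : 0 < p) (hs : 0 < s) :
    ENNReal.ofReal (R ^ (-(s / p)) * Real.exp (-1) * (p ^ β / s ^ (β + 1 / p)))
      ≤ logMoment R (β * p) s ^ (1 / p) := by
  have hR0 : 0 < R := by linarith
  refine le_trans (le_of_eq ?_) (ENNReal.rpow_le_rpow
    (ofReal_le_logMoment hR (by positivity) hs (by positivity : 0 ≤ p / s)) (by positivity))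
  rw [ENNReal.ofReal_rpow_of_nonneg (by positivity) (by positivity)]
  congr 1
  have hpow : ((p / s) ^ (β * p)) ^ (1 / p) = p ^ β / s ^ β := by
    rw [← Real.rpow_mul (by positivity), mul_assoc, mul_one_div_cancel hp.ne', mul_one,
      Real.div_rpow hp.le hs.le]
  have hdecay : ((R * Real.exp (p / s)) ^ (-s)) ^ (1 / p) = R ^ (-(s / p)) * Real.exp (-1) := by
    rw [← Real.rpow_mul (by positivity), Real.mul_rpow hR0.le (by positivity), ← Real.exp_mul]
    congr 2 <;> field_simp
  rw [Real.mul_rpow (by positivity) (by positivity), hpow, Real.div_rpow (by positivity) hs.le,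
    hdecay, Real.rpow_add hs]
  ring

lemma logMoment_rpow_one_div_le_ofReal (hR : 1 ≤ R) (hβ : 0 ≤ β) (hp : 0 < p) (hs : 0 < s) :
    logMoment R (β * p) s ^ (1 / p)
      ≤ ENNReal.ofReal ((2 * β) ^ β * 2 ^ (1 / p) * (p ^ β / s ^ (β + 1 / p))) := by
  refine (ENNReal.rpow_le_rpow (logMoment_le_ofReal hR (by positivity) hs)
    (by positivity)).trans_eq ?_
  rw [ENNReal.ofReal_rpow_of_nonneg (by positivity) (by positivity)]
  congr 1
  have hpow : ((2 * (β * p) / s) ^ (β * p)) ^ (1 / p) = (2 * β) ^ β * p ^ β / s ^ β := by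
    rw [← Real.rpow_mul (by positivity), mul_assoc β, mul_one_div_cancel hp.ne', mul_one,
      ← mul_assoc, Real.div_rpow (by positivity) hs.le, Real.mul_rpow (by positivity) hp.le]
  rw [Real.mul_rpow (by positivity) (by positivity), hpow, Real.div_rpow zero_le_two hs.le,
    Real.rpow_add hs]
  ring

end LogMoment

section Gradient

variable {E : Type*} [NormedAddCommGroup E] [NormedSpace ℝ E] [Nontrivial E] {x : E}

lemma norm_fderiv_comp_norm {f : ℝ → ℝ} {f' : ℝ} (hf : HasDerivAt f f' ‖x‖)
    (hx : DifferentiableAt ℝ (fun y : E ↦ ‖y‖) x) :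
    ‖fderiv ℝ (fun y : E ↦ f ‖y‖) x‖ = |f'| := by
  have h := (hf.comp_hasFDerivAt x hx.hasFDerivAt).fderiv
  simp only [Function.comp_def] at h
  rw [h, norm_smul, norm_fderiv_norm hx, mul_one, Real.norm_eq_abs]

lemma norm_fderiv_log_norm_rpow {Δ : ℝ} (hΔ : 0 ≤ Δ) (hx1 : 1 < ‖x‖)
    (hx : DifferentiableAt ℝ (fun y : E ↦ ‖y‖) x) :
    ‖fderiv ℝ (fun y : E ↦ Real.log ‖y‖ ^ Δ) x‖ = Δ * Real.log ‖x‖ ^ (Δ - 1) * ‖x‖⁻¹ := by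
  have hlog : 0 < Real.log ‖x‖ := Real.log_pos hx1
  rw [norm_fderiv_comp_norm ((Real.hasDerivAt_log (by linarith)).rpow_const (.inl hlog.ne')) hx,
    abs_of_nonneg (by positivity)]
  ring

end Gradient

section Radial

variable {E : Type*} [NormedAddCommGroup E] [NormedSpace ℝ E] [Nontrivial E]
  [FiniteDimensional ℝ E] [MeasurableSpace E] [BorelSpace E] (μ : Measure E) [μ.IsAddHaarMeasure]

local notation "dim" => Module.finrank ℝ

lemma lintegral_fun_norm_addHaar {f : ℝ → ℝ≥0∞} (hf : Measurable f) :
    ∫⁻ x, f ‖x‖ ∂μ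
      = μ.toSphere univ * ∫⁻ r in Ioi (0 : ℝ), ENNReal.ofReal (r ^ (dim E - 1)) * f r :=
  calc ∫⁻ x, f ‖x‖ ∂μ = ∫⁻ x : ({0}ᶜ : Set E), f ‖x.1‖ ∂(μ.comap (↑)) := by
        rw [lintegral_subtype_comap (measurableSet_singleton _).compl fun x ↦ f ‖x‖,
          restrict_compl_singleton]
    _ = ∫⁻ z, f z.2 ∂μ.toSphere.prod (.volumeIoiPow (dim E - 1)) := by
        simpa using μ.measurePreserving_homeomorphUnitSphereProd.lintegral_comp_emb
          (Homeomorph.measurableEmbedding _) (fun z ↦ f z.2)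
    _ = μ.toSphere univ * ∫⁻ r : Ioi (0 : ℝ), f r ∂.volumeIoiPow (dim E - 1) := by
        rw [lintegral_prod _ (by fun_prop)]
        simp only [lintegral_const, mul_comm]
    _ = μ.toSphere univ * ∫⁻ r in Ioi (0 : ℝ), ENNReal.ofReal (r ^ (dim E - 1)) * f r := by
        rw [Measure.volumeIoiPow, lintegral_withDensity_eq_lintegral_mul _ (by fun_prop)
          (by fun_prop)]
        exact congrArg _ (lintegral_subtype_comap measurableSet_Ioi
          fun r ↦ ENNReal.ofReal (r ^ (dim E - 1)) * f r)

lemma setLIntegral_log_norm_rpow_mul_norm_rpow {R : ℝ} (hR : 0 ≤ R) (q s : ℝ) :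
    ∫⁻ x in {x : E | R < ‖x‖}, ENNReal.ofReal (Real.log ‖x‖ ^ q * ‖x‖ ^ (-s - dim E)) ∂μ
      = μ.toSphere univ * logMoment R q s := by
  let f : ℝ → ℝ≥0∞ := fun r ↦ ENNReal.ofReal (Real.log r ^ q * r ^ (-s - dim E))
  have hf : Measurable f := by fun_prop
  have hdensity {r : ℝ} (hr : 0 < r) : ENNReal.ofReal (r ^ (dim E - 1)) * f r
      = ENNReal.ofReal (Real.log r ^ q * r ^ (-s - 1)) := by
    rw [← ENNReal.ofReal_mul (by positivity), mul_left_comm, ← Real.rpow_natCast,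
      ← Real.rpow_add hr, Nat.cast_pred Module.finrank_pos]
    ring_nf
  calc ∫⁻ x in {x : E | R < ‖x‖}, f ‖x‖ ∂μ = ∫⁻ x, (Ioi R).indicator f ‖x‖ ∂μ :=
        (lintegral_indicator (measurableSet_lt measurable_const measurable_norm) _).symm
    _ = μ.toSphere univ * ∫⁻ r in Ioi 0, ENNReal.ofReal (r ^ (dim E - 1)) * (Ioi R).indicator f r :=
        lintegral_fun_norm_addHaar μ (hf.indicator measurableSet_Ioi)
    _ = μ.toSphere univ * ∫⁻ r in Ioi R, ENNReal.ofReal (r ^ (dim E - 1)) * f r := by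
        simp_rw [← indicator_mul_right (Ioi R) fun r ↦ ENNReal.ofReal (r ^ (dim E - 1))]
        rw [setLIntegral_indicator measurableSet_Ioi, inter_eq_left.2 (Ioi_subset_Ioi hR)]
    _ = μ.toSphere univ * logMoment R q s := by
        rw [logMoment, setLIntegral_congr_fun measurableSet_Ioi
          fun r hr ↦ hdensity (hR.trans_lt hr)]

lemma setLIntegral_norm_fderiv_log_norm_rpow {R Δ : ℝ} (hR : 1 ≤ R) (hΔ : 0 ≤ Δ) (α p : ℝ) :
    ∫⁻ x in {x : E | R < ‖x‖}, ENNReal.ofReal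
        ((‖fderiv ℝ (fun y : E ↦ Real.log ‖y‖ ^ Δ) x‖ * ‖x‖ ^ (-α)) ^ p) ∂μ
      = ENNReal.ofReal (Δ ^ p)
        * (μ.toSphere univ * logMoment R ((Δ - 1) * p) (p * (1 + α) - dim E)) := by
  rw [← setLIntegral_log_norm_rpow_mul_norm_rpow μ (by linarith),
    ← lintegral_const_mul' _ _ ofReal_ne_top]
  -- By Rademacher's theorem the norm is differentiable almost everywhere.
  refine setLIntegral_congr_fun_ae (measurableSet_lt measurable_const measurable_norm) ?_
  filter_upwards [ae_differentiableAt_norm (μ := μ)] with x hdiff hx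
  have hx1 : 1 < ‖x‖ := hR.trans_lt hx
  have hx0 : 0 < ‖x‖ := by linarith
  have hlog : 0 < Real.log ‖x‖ := Real.log_pos hx1
  rw [norm_fderiv_log_norm_rpow hΔ hx1 hdiff, ← ENNReal.ofReal_mul (by positivity), mul_assoc,
    ← Real.rpow_neg_one, ← Real.rpow_add hx0, Real.mul_rpow (by positivity) (by positivity),
    Real.mul_rpow hΔ (by positivity), ← Real.rpow_mul hlog.le, ← Real.rpow_mul hx0.le]
  ring_nf

lemma setLIntegral_norm_fderiv_log_norm_rpow_rpow_one_div {R Δ p : ℝ} (hR : 1 ≤ R) (hΔ : 0 ≤ Δ)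
    (hp : 0 < p) (α : ℝ) :
    (∫⁻ x in {x : E | R < ‖x‖}, ENNReal.ofReal
        ((‖fderiv ℝ (fun y : E ↦ Real.log ‖y‖ ^ Δ) x‖ * ‖x‖ ^ (-α)) ^ p) ∂μ) ^ (1 / p)
      = ENNReal.ofReal (Δ * μ.toSphere.real univ ^ (1 / p))
        * logMoment R ((Δ - 1) * p) (p * (1 + α) - dim E) ^ (1 / p) := by
  have hp' : 0 ≤ 1 / p := by positivity
  rw [setLIntegral_norm_fderiv_log_norm_rpow μ hR hΔ, ← mul_assoc,
    ENNReal.mul_rpow_of_nonneg _ _ hp', ENNReal.mul_rpow_of_nonneg _ _ hp',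
    ENNReal.ofReal_rpow_of_nonneg (by positivity) hp', ← Real.rpow_mul hΔ,
    mul_one_div_cancel hp.ne', Real.rpow_one, ENNReal.ofReal_mul hΔ,
    ← ENNReal.ofReal_rpow_of_nonneg measureReal_nonneg hp', ofReal_measureReal]

theorem grad_v_estimate_general {R α Δ : ℝ} (hR : 1 ≤ R) (hα : -1 < α) (hΔ : 1 ≤ Δ) :
    ∃ c₁ c₂ : ℝ, 0 < c₁ ∧ c₁ ≤ c₂ ∧
      ∀ p : ℝ, (dim E : ℝ) / (1 + α) < p →
        ENNReal.ofReal (c₁ * (p ^ (Δ - 1) / (p * (1 + α) - dim E) ^ ((Δ - 1) + 1 / p)))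
          ≤ (∫⁻ x in {x : E | R < ‖x‖}, ENNReal.ofReal
              ((‖fderiv ℝ (fun y : E ↦ Real.log ‖y‖ ^ Δ) x‖ * ‖x‖ ^ (-α)) ^ p) ∂μ) ^ (1 / p) ∧
        (∫⁻ x in {x : E | R < ‖x‖}, ENNReal.ofReal
            ((‖fderiv ℝ (fun y : E ↦ Real.log ‖y‖ ^ Δ) x‖ * ‖x‖ ^ (-α)) ^ p) ∂μ) ^ (1 / p)
          ≤ ENNReal.ofReal
              (c₂ * (p ^ (Δ - 1) / (p * (1 + α) - dim E) ^ ((Δ - 1) + 1 / p))) := by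
  have hα' : 0 < 1 + α := by linarith
  have hβ : 0 ≤ Δ - 1 := by linarith
  have hdim : 0 < (dim E : ℝ) := by exact_mod_cast Module.finrank_pos
  set ω := μ.toSphere.real univ
  have : NeZero μ.toSphere := ⟨μ.toSphere_ne_zero⟩
  have hω : 0 < ω := measureReal_univ_pos
  set m := (1 + α) / dim E
  set c₁ := Δ * min 1 (ω ^ m) * (R ^ (-(1 + α)) * Real.exp (-1))
  set c₂ := Δ * max 1 (ω ^ m) * ((2 * (Δ - 1)) ^ (Δ - 1) * 2 ^ m)
  refine ⟨c₁, max c₁ c₂, by positivity, le_max_left _ _, fun p hp ↦ ?_⟩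
  have hp0 : 0 < p := lt_trans (by positivity) hp
  set s := p * (1 + α) - dim E
  have hs : 0 < s := sub_pos.2 ((div_lt_iff₀ hα').1 hp)
  have hpm : 1 / p ≤ m := by
    simpa only [one_div_div] using one_div_le_one_div_of_le (by positivity) hp.le
  have hsp : s / p ≤ 1 + α := by
    rw [div_le_iff₀ hp0]
    linarith
  have hc₁ : c₁ ≤ Δ * ω ^ (1 / p) * (R ^ (-(s / p)) * Real.exp (-1)) := by
    dsimp only [c₁]
    gcongr
    exact min_one_rpow_le_rpow hω (by positivity) hpm
  have hc₂ : Δ * ω ^ (1 / p) * ((2 * (Δ - 1)) ^ (Δ - 1) * 2 ^ (1 / p)) ≤ c₂ := by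
    dsimp only [c₂]
    gcongr
    · exact rpow_le_max_one_rpow hω.le (by positivity) hpm
    · exact one_le_two
  rw [setLIntegral_norm_fderiv_log_norm_rpow_rpow_one_div μ hR (by linarith) hp0]
  constructor
  · refine le_trans ?_ (mul_le_mul_right (ofReal_le_logMoment_rpow_one_div hR hβ hp0 hs) _)
    rw [← ENNReal.ofReal_mul (by positivity), ← mul_assoc]
    gcongr
  · refine (mul_le_mul_right (logMoment_rpow_one_div_le_ofReal hR hβ hp0 hs) _).trans ?_
    rw [← ENNReal.ofReal_mul (by positivity), ← mul_assoc]
    gcongr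
    exact le_max_of_le_right hc₂

end Radial

/-- For `d ≥ 2`, `α > −1` with `p₀ = d/(1+α) > 1` and `Δ > 1`, the function
`v(x) = (log|x|)^Δ` on `|x| > e` satisfies: for all `p ∈ (p₀, ∞)` the weighted norm
`( ∫_{|x|>e} (|grad v(x)|·|x|^{−α})^p dx )^{1/p}` is comparable (with constants
depending only on `d, α, Δ`) to `p^{Δ−1}/(p(1+α) − d)^{(Δ−1) + 1/p}`. -/
theorem grad_v_estimate (d : ℕ) (hd : 2 ≤ d) (α Δ : ℝ) (hα : -1 < α)
    (hp₀ : 1 < (d : ℝ) / (1 + α)) (hΔ : 1 < Δ) :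
    ∃ c₁ c₂ : ℝ, 0 < c₁ ∧ c₁ ≤ c₂ ∧
      ∀ p : ℝ, (d : ℝ) / (1 + α) < p →
        ENNReal.ofReal (c₁ * (p ^ (Δ - 1) / (p * (1 + α) - (d : ℝ)) ^ ((Δ - 1) + 1 / p)))
          ≤ (∫⁻ x in {x : EuclideanSpace ℝ (Fin d) | Real.exp 1 < ‖x‖},
              ENNReal.ofReal
                ((‖fderiv ℝ (fun y : EuclideanSpace ℝ (Fin d) => (Real.log ‖y‖) ^ Δ) x‖
                    * ‖x‖ ^ (-α)) ^ p)) ^ (1 / p) ∧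
        (∫⁻ x in {x : EuclideanSpace ℝ (Fin d) | Real.exp 1 < ‖x‖},
              ENNReal.ofReal
                ((‖fderiv ℝ (fun y : EuclideanSpace ℝ (Fin d) => (Real.log ‖y‖) ^ Δ) x‖
                    * ‖x‖ ^ (-α)) ^ p)) ^ (1 / p)
          ≤ ENNReal.ofReal (c₂ * (p ^ (Δ - 1) / (p * (1 + α) - (d : ℝ)) ^ ((Δ - 1) + 1 / p))) := by
  have : NeZero d := ⟨by omega⟩
  simpa only [finrank_euclideanSpace_fin] using grad_v_estimate_general
    (volume : Measure (EuclideanSpace ℝ (Fin d))) (Real.one_le_exp zero_le_one) hα hΔ.le
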